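/- arXiv:alg-geom/9403010 — 2 statements merged into one kernel-verified Lean document; each statement's English description precedes it below -/
import Mathlib

section
/- Let 1 ≤ k ≤ n. There exists a polynomial W ∈ ℂ[X₁,…,X_k] (the Landau–Ginzburg potential) such that ∂W/∂Xᵢ = Y_{n+1−i} for i = 1,…,k, and such that substituting Xᵢ ↦ (−1)ⁱ eᵢ(λ₁,…,λ_k) (the i-th elementary symmetric polynomial, with alternating sign) into W yields −(1/(n+1)) ∑_{i=1}^{k} λᵢ^{n+1} in ℂ[λ₁,…,λ_k]. -/
/-- The Segre polynomials `Y_j ∈ ℂ[X₁,…,X_k]`: `Y₀ = 1` and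
`Y_j = -∑_{i=1}^{min(j,k)} Xᵢ · Y_{j-i}` for `j ≥ 1`. -/
noncomputable def segreY (k : ℕ) : ℕ → MvPolynomial (Fin k) ℂ
  | 0 => 1
  | j + 1 =>
    -∑ i : Fin (min (j + 1) k),
      MvPolynomial.X (Fin.castLE (min_le_right (j + 1) k) i) * segreY k (j - i.val)
  decreasing_by omega

/-!
Let `P(t) = 1 + X₁ t + ⋯ + X_k t^k`. The recursion defining the `Y_j` says that
`Y(t) = ∑ Y_j t^j` is the inverse of `P`, and the potential is the coefficient of `t^(n+1)` in
`log P`, that is, `(n + 1)⁻¹` times the coefficient of `t^n` in `∂ₜP · Y`.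

* The derivations `∂ᵢ` and `∂ₜ` commute, so `∂ᵢ(∂ₜP / P) = ∂ₜ(∂ᵢP / P)`. As `∂ᵢP = tⁱ`, this is
  `∂ₜ(tⁱ Y)`, whose coefficient at `t^n` is `(n + 1) Y_{n+1-i}`.
* Under `Xᵢ ↦ (-1)ⁱ eᵢ(λ)`, Newton's identities turn `∂ₜP / P` into `-∑ p_{m+1} t^m`.
-/

open MvPolynomial (aeval esymm pderiv psum)
open PowerSeries (coeff mk)
open Finset.HasAntidiagonal (antidiagonal)
open scoped PowerSeries

section Derivation

variable {R S A : Type*} [CommRing R] [CommRing S] [CommRing A] [Algebra R A] [Algebra S A]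

lemma derivation_logDeriv_comm (D₁ : Derivation R A A) (D₂ : Derivation S A A) {a b : A}
    (hcomm : D₁ (D₂ a) = D₂ (D₁ a)) (hab : a * b = 1) :
    D₁ (D₂ a * b) = D₂ (D₁ a * b) := by
  have hba : b * a = 1 := by rw [mul_comm, hab]
  simp only [Derivation.leibniz, D₁.leibniz_of_mul_eq_one hba, D₂.leibniz_of_mul_eq_one hba,
    hcomm, smul_eq_mul]
  ring

/-- The extension of a derivation `D` of `A` to `A⟦t⟧` acting on each coefficient, so that `t` is a
constant. -/
noncomputable def coeffwiseDerivation (D : Derivation R A A) :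
    Derivation R A⟦X⟧ A⟦X⟧ :=
  Derivation.mk'
    { toFun := fun f => mk fun m => D (coeff m f)
      map_add' := fun f g => by ext m; simp
      map_smul' := fun r f => by ext m; simp }
    fun f g => by
      ext m
      simp only [LinearMap.coe_mk, AddHom.coe_mk, PowerSeries.coeff_mk, PowerSeries.coeff_mul,
        map_sum, map_add, Derivation.leibniz, smul_eq_mul, Finset.sum_add_distrib]
      congr 1
      rw [← Finset.Nat.sum_antidiagonal_swap]
      rfl

lemma coeff_coeffwiseDerivation (D : Derivation R A A) (m : ℕ) (f : A⟦X⟧) :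
    coeff m (coeffwiseDerivation D f) = D (coeff m f) := by
  simp [coeffwiseDerivation]

lemma coeffwiseDerivation_C (D : Derivation R A A) (a : A) :
    coeffwiseDerivation D (PowerSeries.C a) = PowerSeries.C (D a) := by
  ext m
  simp only [coeff_coeffwiseDerivation, PowerSeries.coeff_C]
  split_ifs <;> simp

lemma coeffwiseDerivation_X (D : Derivation R A A) :
    coeffwiseDerivation D PowerSeries.X = 0 := by
  ext m
  simp only [coeff_coeffwiseDerivation, PowerSeries.coeff_X]
  split_ifs <;> simp

lemma coeffwiseDerivation_derivative (D : Derivation R A A) (f : A⟦X⟧) :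
    coeffwiseDerivation D (d⁄dX A f) = d⁄dX A (coeffwiseDerivation D f) := by
  ext m
  have hD : D ((m : A) + 1) = 0 := by simp
  simp [coeff_coeffwiseDerivation, PowerSeries.coeff_derivative, hD, mul_comm]

end Derivation

section ChernSeries

variable {A B : Type*} [CommRing A] [CommRing B] {k : ℕ}

/-- The total Chern series `1 + c₁ t + ⋯ + c_k t^k`; the class `cᵢ` has index `i - 1` in `Fin k`. -/
noncomputable def chernSeries (c : Fin k → A) : A⟦X⟧ :=
  1 + ∑ i, PowerSeries.C (c i) * PowerSeries.X ^ (i.val + 1)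

/-- The total Segre series, inverse to the total Chern series. For the generic classes `cᵢ = Xᵢ` its
coefficients are the polynomials `Y_j`. -/
noncomputable def segreSeries (c : Fin k → A) : A⟦X⟧ :=
  PowerSeries.invOfUnit (chernSeries c) 1

/-- The logarithmic derivative `∂ₜP / P` of the total Chern series `P`, from which the
Landau–Ginzburg potential is read off. -/
noncomputable def chernLogDeriv (c : Fin k → A) : A⟦X⟧ :=
  d⁄dX A (chernSeries c) * segreSeries c

lemma coeff_zero_chernSeries (c : Fin k → A) : coeff 0 (chernSeries c) = 1 := by
  simp [chernSeries]

lemma coeff_succ_chernSeries (c : Fin k → A) (j : ℕ) :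
    coeff (j + 1) (chernSeries c) = if h : j < k then c ⟨j, h⟩ else 0 := by
  simp only [chernSeries, map_add, map_sum, PowerSeries.coeff_one, PowerSeries.coeff_C_mul,
    PowerSeries.coeff_X_pow, j.succ_ne_zero, if_false, zero_add, Nat.add_right_cancel_iff,
    mul_ite, mul_one, mul_zero]
  split_ifs with h
  · simpa [Fin.ext_iff] using Fintype.sum_ite_eq (⟨j, h⟩ : Fin k) c
  · exact Finset.sum_eq_zero fun i _ => if_neg (by omega)

lemma chernSeries_mul_segreSeries (c : Fin k → A) : chernSeries c * segreSeries c = 1 :=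
  PowerSeries.mul_invOfUnit _ _ (by simp [chernSeries])

lemma coeff_zero_segreSeries (c : Fin k → A) : coeff 0 (segreSeries c) = 1 := by
  simp [segreSeries]

lemma coeff_succ_segreSeries (c : Fin k → A) (j : ℕ) :
    coeff (j + 1) (segreSeries c) =
      -∑ i : Fin k with i.val ≤ j, c i * coeff (j - i.val) (segreSeries c) := by
  have h := congrArg (coeff (j + 1)) (chernSeries_mul_segreSeries c)
  simp only [chernSeries, add_mul, one_mul, Finset.sum_mul, map_add, map_sum, mul_assoc,
    PowerSeries.coeff_C_mul, PowerSeries.coeff_X_pow_mul', PowerSeries.coeff_one,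
    j.succ_ne_zero, if_false, Nat.add_le_add_iff_right, Nat.add_sub_add_right, mul_ite,
    mul_zero, ← Finset.sum_filter] at h
  exact eq_neg_of_add_eq_zero_left h

lemma map_chernSeries (φ : A →+* B) (c : Fin k → A) :
    PowerSeries.map φ (chernSeries c) = chernSeries (φ ∘ c) := by
  simp [chernSeries]

lemma map_segreSeries (φ : A →+* B) (c : Fin k → A) :
    PowerSeries.map φ (segreSeries c) = segreSeries (φ ∘ c) := by
  refine left_inv_eq_right_inv (a := chernSeries (φ ∘ c)) ?_ (chernSeries_mul_segreSeries _)
  rw [← map_chernSeries, ← map_mul, mul_comm, chernSeries_mul_segreSeries, map_one]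

lemma map_chernLogDeriv (φ : A →+* B) (c : Fin k → A) :
    PowerSeries.map φ (chernLogDeriv c) = chernLogDeriv (φ ∘ c) := by
  have map_derivative (f : A⟦X⟧) :
      PowerSeries.map φ (d⁄dX A f) = d⁄dX B (PowerSeries.map φ f) := by
    ext m
    simp [PowerSeries.coeff_derivative]
  rw [chernLogDeriv, map_mul, map_derivative, map_chernSeries, map_segreSeries, chernLogDeriv]

end ChernSeries

section GenericClasses

variable {R : Type*} [CommRing R] {k : ℕ}

lemma coeffwiseDerivation_pderiv_chernSeries (i : Fin k) :
    coeffwiseDerivation (pderiv i)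
      (chernSeries (MvPolynomial.X : Fin k → MvPolynomial (Fin k) R)) =
        PowerSeries.X ^ (i.val + 1) := by
  simp [chernSeries, Derivation.leibniz, coeffwiseDerivation_C, coeffwiseDerivation_X,
    MvPolynomial.pderiv_X, Pi.single_apply, apply_ite PowerSeries.C]

lemma coeffwiseDerivation_pderiv_chernLogDeriv (i : Fin k) :
    coeffwiseDerivation (pderiv i)
      (chernLogDeriv (MvPolynomial.X : Fin k → MvPolynomial (Fin k) R)) =
        d⁄dX _ (PowerSeries.X ^ (i.val + 1) * segreSeries MvPolynomial.X) := by
  rw [chernLogDeriv, derivation_logDeriv_comm _ _ (coeffwiseDerivation_derivative _ _)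
    (chernSeries_mul_segreSeries _), coeffwiseDerivation_pderiv_chernSeries]

lemma segreY_eq_coeff_segreSeries (k j : ℕ) :
    segreY k j = coeff j (segreSeries MvPolynomial.X) := by
  induction j using Nat.strong_induction_on with
  | _ j ih =>
    rcases j with _ | j
    · rw [segreY, coeff_zero_segreSeries]
    · rw [segreY, coeff_succ_segreSeries, neg_inj]
      refine Finset.sum_bij (fun i _ => Fin.castLE (min_le_right (j + 1) k) i) ?_ ?_ ?_ ?_
      · intro i _
        simpa using Nat.le_of_lt_succ (lt_min_iff.mp i.isLt).1
      · exact fun a _ b _ hab => Fin.castLE_injective _ hab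
      · intro b hb
        have hbj : b.val ≤ j := by simpa using hb
        exact ⟨⟨b, lt_min (Nat.lt_succ_of_le hbj) b.isLt⟩, Finset.mem_univ _, rfl⟩
      · intro i _
        rw [ih _ (by omega), Fin.val_castLE]

end GenericClasses

section ElementarySymmetric

variable (σ R : Type*) [Fintype σ] [CommRing R]

/-- The classes `(-1)ⁱ eᵢ`, for which the total Chern series is `∏ (1 - λ t)`; as in `chernSeries`,
index `i` in `Fin k` stands for the class of degree `i + 1`. -/
noncomputable def signedEsymm (k : ℕ) (i : Fin k) : MvPolynomial σ R :=
  (-1) ^ (i.val + 1) * esymm σ R (i.val + 1)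

lemma esymm_eq_zero_of_card_lt {m : ℕ} (hm : Fintype.card σ < m) :
    esymm σ R m = 0 := by
  rw [esymm, Finset.powersetCard_eq_empty.mpr hm, Finset.sum_empty]

lemma coeff_chernSeries_signedEsymm {k : ℕ} (hk : Fintype.card σ ≤ k) (m : ℕ) :
    coeff m (chernSeries (signedEsymm σ R k)) = (-1) ^ m * esymm σ R m := by
  rcases m with _ | j
  · simp [coeff_zero_chernSeries]
  · rw [coeff_succ_chernSeries]
    split_ifs with hj
    · rfl
    · rw [esymm_eq_zero_of_card_lt σ R (by omega), mul_zero]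

lemma succ_mul_esymm_succ (m : ℕ) :
    ((m : MvPolynomial σ R) + 1) * esymm σ R (m + 1) =
      (-1) ^ m * ∑ a ∈ antidiagonal m,
        (-1) ^ a.1 * esymm σ R a.1 * psum σ R (a.2 + 1) := by
  rw [← Nat.cast_succ, MvPolynomial.mul_esymm_eq_sum, Finset.sum_filter,
    Finset.Nat.sum_antidiagonal_succ', if_neg (lt_irrefl _), zero_add, pow_add _ m 2,
    neg_one_sq, mul_one]
  exact congrArg _ (Finset.sum_congr rfl fun a ha =>
    if_pos (Finset.Nat.antidiagonal.fst_lt ha))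

lemma derivative_chernSeries_signedEsymm {k : ℕ} (hk : Fintype.card σ ≤ k) :
    d⁄dX _ (chernSeries (signedEsymm σ R k)) =
      -(chernSeries (signedEsymm σ R k) * mk fun m => psum σ R (m + 1)) := by
  ext1 m
  have hsign : (-1 : MvPolynomial σ R) ^ (m + 1) * (-1) ^ m = -1 := by
    rw [pow_succ', mul_assoc, ← mul_pow, neg_one_mul, neg_one_mul, neg_neg, one_pow]
  simp only [PowerSeries.coeff_derivative, map_neg, PowerSeries.coeff_mul, PowerSeries.coeff_mk,
    coeff_chernSeries_signedEsymm σ R hk]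
  rw [mul_assoc, mul_comm (esymm σ R _), succ_mul_esymm_succ, ← mul_assoc, hsign,
    neg_one_mul]

lemma chernLogDeriv_signedEsymm {k : ℕ} (hk : Fintype.card σ ≤ k) :
    chernLogDeriv (signedEsymm σ R k) = -mk fun m => psum σ R (m + 1) := by
  rw [chernLogDeriv, derivative_chernSeries_signedEsymm σ R hk, neg_mul, mul_right_comm,
    chernSeries_mul_segreSeries, one_mul]

end ElementarySymmetric

section Potential

variable (R : Type*) [CommRing R] (n k : ℕ) [Invertible ((n : R) + 1)]

/-- The Landau–Ginzburg potential: the coefficient of `t^(n+1)` in `log (1 + X₁ t + ⋯ + X_k t^k)`,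
obtained by integrating the logarithmic derivative. -/
noncomputable def landauGinzburgPotential : MvPolynomial (Fin k) R :=
  MvPolynomial.C (⅟((n : R) + 1)) * coeff n (chernLogDeriv MvPolynomial.X)

lemma pderiv_landauGinzburgPotential (i : Fin k) :
    pderiv i (landauGinzburgPotential R n k) =
      if i.val ≤ n then coeff (n - i.val) (segreSeries MvPolynomial.X) else 0 := by
  have hcast : (n : MvPolynomial (Fin k) R) + 1 = MvPolynomial.C ((n : R) + 1) := by simp
  rw [landauGinzburgPotential, MvPolynomial.pderiv_C_mul, ← coeff_coeffwiseDerivation,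
    coeffwiseDerivation_pderiv_chernLogDeriv, PowerSeries.coeff_derivative, hcast, mul_left_comm,
    ← MvPolynomial.C_mul, invOf_mul_self, MvPolynomial.C_1, mul_one, PowerSeries.coeff_X_pow_mul']
  simp only [Nat.add_le_add_iff_right, Nat.add_sub_add_right]

lemma aeval_signedEsymm_landauGinzburgPotential (σ : Type*) [Fintype σ]
    (hk : Fintype.card σ ≤ k) :
    aeval (signedEsymm σ R k) (landauGinzburgPotential R n k) =
      -(MvPolynomial.C (⅟((n : R) + 1)) * psum σ R (n + 1)) := by
  have hX : aeval (R := R) (signedEsymm σ R k) ∘ MvPolynomial.X = signedEsymm σ R k :=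
    funext fun i => MvPolynomial.aeval_X _ i
  have hcoeff := congrArg (coeff n) (map_chernLogDeriv
    (aeval (R := R) (signedEsymm σ R k)).toRingHom MvPolynomial.X)
  simp only [AlgHom.toRingHom_eq_coe, RingHom.coe_coe, PowerSeries.coeff_map, hX,
    chernLogDeriv_signedEsymm σ R hk, map_neg, PowerSeries.coeff_mk] at hcoeff
  rw [landauGinzburgPotential, map_mul, hcoeff, MvPolynomial.aeval_C, mul_neg]
  rfl

theorem landau_ginzburg_potential_exists_general :
    ∃ W : MvPolynomial (Fin k) R,
      (∀ i : Fin k, pderiv i W =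
        if i.val ≤ n then coeff (n - i.val) (segreSeries MvPolynomial.X) else 0) ∧
      ∀ (σ : Type*) [Fintype σ], Fintype.card σ ≤ k →
        aeval (signedEsymm σ R k) W =
          -(MvPolynomial.C (⅟((n : R) + 1)) * psum σ R (n + 1)) :=
  ⟨landauGinzburgPotential R n k, pderiv_landauGinzburgPotential R n k,
    aeval_signedEsymm_landauGinzburgPotential R n k⟩

end Potential

/-- For `1 ≤ k ≤ n` there is a Landau–Ginzburg potential
`W ∈ ℂ[X₁,…,X_k]` with `∂W/∂Xᵢ = Y_{n+1-i}` for `i = 1,…,k`, and such that substituting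
`Xᵢ ↦ (-1)ⁱ eᵢ(λ₁,…,λ_k)` (elementary symmetric polynomials with alternating signs)
into `W` yields `-(1/(n+1)) ∑_{i=1}^k λᵢ^{n+1}`. -/
theorem landau_ginzburg_potential_exists
    (n k : ℕ) (hk : 1 ≤ k) (hkn : k ≤ n) :
    ∃ W : MvPolynomial (Fin k) ℂ,
      (∀ i : Fin k, MvPolynomial.pderiv i W = segreY k (n - i.val)) ∧
      MvPolynomial.aeval
          (fun i : Fin k =>
            (-1 : MvPolynomial (Fin k) ℂ) ^ (i.val + 1) *
              MvPolynomial.esymm (Fin k) ℂ (i.val + 1)) W =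
        -(MvPolynomial.C (((n : ℂ) + 1)⁻¹) *
          ∑ i : Fin k, MvPolynomial.X i ^ (n + 1)) := by
  have : Invertible ((n : ℂ) + 1) := invertibleOfNonzero n.cast_add_one_ne_zero
  obtain ⟨W, hderiv, hsubst⟩ := landau_ginzburg_potential_exists_general ℂ n k
  refine ⟨W, fun i => ?_, ?_⟩
  · rw [hderiv, if_pos (i.isLt.le.trans hkn), segreY_eq_coeff_segreSeries]
  · rw [← invOf_eq_inv]
    exact hsubst (Fin k) (Fintype.card_fin k).le
end

section
/- Let n ≥ k ≥ 1 be integers and a ∈ ℂ with a ≠ 0. Then the sum, over all k-tuples (λ₁,…,λ_k) of complex numbers with λᵢⁿ = a for each i, of the quantity (∏_{i=1}^{k} λᵢ^{n−k}) · (∏_{1 ≤ i < j ≤ k} (λᵢ − λⱼ)²) / (∏_{i=1}^{k} n·λᵢ^{n−1}) equals (−1)^{k(k−1)/2} · k!. -/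
/-!
The `n`-th roots of `a` are the simple roots of the monic polynomial `P = X ^ n - a`, and
`n λ ^ (n - 1)` is `P'(λ)`. The same value arises for the roots of any monic `P` of degree `n` with
simple roots, and with `λ ^ (n - k)` replaced by `Q(λ)` for any monic `Q` of degree `n - k`.

Each summand is `∏ᵢ w(λᵢ)` times the square of the Vandermonde determinant of `λ`, with weight
`w = Q / P'`. Andréief's identity turns such a sum into `k!` times the determinant of the Hankel
matrix of the moments `∑ w(x) x ^ (i + j)` over the roots `x` of `P`. By Lagrange interpolation
`∑ f(x) / P'(x)` is the coefficient of `X ^ (n - 1)` in `f` when `deg f < n`, so the moments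
vanish for `i + j < k - 1` and equal `1` for `i + j = k - 1`. The Hankel matrix is thus triangular
with respect to the antidiagonal, with ones on it, and its determinant is the sign
`(-1) ^ (k (k - 1) / 2)` of the order-reversing permutation.
-/

open Finset Polynomial
open scoped Matrix Nat

section Determinants

variable {R ι α : Type*} [CommRing R] [Fintype ι] [DecidableEq ι] {k : ℕ}

theorem sum_piFinset_det_of_apply (s : ι → Finset α) (f : ι → ι → α → R) :
    ∑ l ∈ Fintype.piFinset s, (Matrix.of fun i j => f i j (l j)).det =
      (Matrix.of fun i j => ∑ x ∈ s j, f i j x).det := by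
  have hrows : (Matrix.of fun i j => ∑ x ∈ s j, f i j x)ᵀ = fun j => ∑ x ∈ s j, (f · j x) := by
    ext j i
    simp
  simp_rw [← Matrix.det_transpose (Matrix.of _), hrows]
  exact (Matrix.detRowAlternating.toMultilinearMap.map_sum_finset (fun j x i => f i j x) s).symm

/-- **Andréief's identity** over a finite set. Once the first determinant is expanded, every
permutation contributes the same amount, by multilinearity of the second. -/
theorem sum_piFinset_det_mul_det (s : Finset α) (f g : ι → α → R) :
    ∑ l ∈ Fintype.piFinset (fun _ : ι => s),
        (Matrix.of fun i j => f i (l j)).det * (Matrix.of fun i j => g i (l j)).det =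
      (Fintype.card ι)! * (Matrix.of fun i j => ∑ x ∈ s, f i x * g j x).det := by
  set M : Matrix ι ι R := Matrix.of fun i j => ∑ x ∈ s, f i x * g j x
  have sum_term (σ : Equiv.Perm ι) :
      ∑ l ∈ Fintype.piFinset (fun _ : ι => s),
          (∏ j, f (σ j) (l j)) * (Matrix.of fun i j => g i (l j)).det =
        Equiv.Perm.sign σ * M.det := by
    simp_rw [← Matrix.det_mul_row, ← Matrix.det_permute, Matrix.of_apply]
    rw [sum_piFinset_det_of_apply (fun _ => s) fun i j x => f (σ j) x * g i x,
      ← Matrix.det_transpose]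
    rfl
  have sign_mul_self (σ : Equiv.Perm ι) :
      ((Equiv.Perm.sign σ : ℤ) : R) * (Equiv.Perm.sign σ : ℤ) = 1 := by
    rw [← Int.cast_mul, Int.units_coe_mul_self, Int.cast_one]
  simp_rw [Matrix.det_apply' (Matrix.of fun i _ => f i _), Matrix.of_apply, sum_mul, mul_assoc]
  rw [sum_comm]
  simp_rw [← mul_sum, sum_term, ← mul_assoc, sign_mul_self, one_mul]
  rw [sum_const, card_univ, Fintype.card_perm, nsmul_eq_mul]

theorem sum_piFinset_prod_mul_det_vandermonde_sq (s : Finset R) (w : R → R) :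
    ∑ l ∈ Fintype.piFinset (fun _ : Fin k => s),
        (∏ i, w (l i)) * (Matrix.vandermonde l).det ^ 2 =
      k ! * (Matrix.of fun i j : Fin k => ∑ x ∈ s, w x * x ^ (i + j : ℕ)).det := by
  have andreief := sum_piFinset_det_mul_det s (fun (i : Fin k) x => w x * x ^ (i : ℕ))
    (fun i x => x ^ (i : ℕ))
  simp_rw [Fintype.card_fin, mul_assoc, ← pow_add] at andreief
  rw [← andreief]
  refine sum_congr rfl fun l _ => ?_
  have det_pow : (Matrix.of fun i j : Fin k => l j ^ (i : ℕ)).det = (Matrix.vandermonde l).det :=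
    Matrix.det_transpose (Matrix.vandermonde l)
  have det_weighted : (Matrix.of fun i j : Fin k => w (l j) * l j ^ (i : ℕ)).det =
      (∏ i, w (l i)) * (Matrix.vandermonde l).det := by
    rw [← det_pow, ← Matrix.det_mul_row]
    rfl
  rw [det_weighted, det_pow, sq, mul_assoc]

theorem prod_filter_lt_sub_sq (l : Fin k → R) :
    ∏ p : Fin k × Fin k with p.1 < p.2, (l p.1 - l p.2) ^ 2 =
      (Matrix.vandermonde l).det ^ 2 := by
  simp_rw [Matrix.det_vandermonde, ← prod_pow, prod_filter, Fintype.prod_prod_type]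
  refine prod_congr rfl fun i _ => ?_
  rw [← prod_filter, filter_lt_eq_Ioi]
  exact prod_congr rfl fun j _ => sub_sq_comm _ _

theorem sign_revPerm (k : ℕ) :
    Equiv.Perm.sign (Fin.revPerm : Equiv.Perm (Fin k)) = (-1) ^ (k * (k - 1) / 2) := by
  have inversions (j : Fin k) : ∏ i ∈ Iio j,
      (if Fin.revPerm i < Fin.revPerm j then (1 : ℤˣ) else -1) = (-1) ^ (j : ℕ) := by
    rw [prod_congr rfl fun i hi => if_neg ?_, prod_const, Fin.card_Iio]
    simpa using (mem_Iio.mp hi).le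
  simp_rw [Equiv.Perm.sign_eq_prod_prod_Iio, inversions]
  rw [prod_pow_eq_pow_sum, Fin.sum_univ_eq_sum_range (fun i => i), sum_range_id]

theorem det_of_forall_lt_rev_eq_zero (M : Matrix (Fin k) (Fin k) R)
    (hM : ∀ i j, j < i.rev → M i j = 0) :
    M.det = (-1) ^ (k * (k - 1) / 2) * ∏ i : Fin k, M i.rev i := by
  have upper : (M.submatrix Fin.revPerm id).IsUpperTriangular := fun i j hji =>
    hM _ _ (by simpa using hji)
  have rev_rev : (M.submatrix Fin.revPerm id).submatrix Fin.revPerm id = M := by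
    ext
    simp
  rw [← congrArg Matrix.det rev_rev, Matrix.det_permute, Matrix.det_of_isUpperTriangular upper,
    sign_revPerm]
  simp

end Determinants

section Residues

variable {K : Type*} [Field K] [DecidableEq K] {P Q f : K[X]} {k : ℕ}

theorem nodal_roots_toFinset (hP : P.Monic) (hsplits : P.Splits) (hsep : P.Separable) :
    Lagrange.nodal P.roots.toFinset id = P := by
  conv_rhs => rw [hsplits.eq_prod_roots_of_monic hP]
  rw [Lagrange.nodal_eq, Finset.prod, Multiset.toFinset_val, (nodup_roots hsep).dedup]
  rfl

theorem sum_roots_eval_div_eval_derivative (hP : P.Monic) (hsplits : P.Splits)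
    (hsep : P.Separable) (hf : f.degree < P.degree) :
    ∑ x ∈ P.roots.toFinset, f.eval x / P.derivative.eval x = f.coeff (P.natDegree - 1) := by
  have hnodal := nodal_roots_toFinset hP hsplits hsep
  have hcard : #P.roots.toFinset = P.natDegree := by
    rw [← Lagrange.natDegree_nodal (v := id), hnodal]
  rw [← hcard, Lagrange.coeff_eq_sum Function.injective_id.injOn
    (by rwa [hcard, ← degree_eq_natDegree hP.ne_zero])]
  refine sum_congr rfl fun x hx => ?_
  have hderiv := Lagrange.eval_nodal_derivative_eval_node_eq (v := id) hx
  rw [hnodal, Lagrange.eval_nodal] at hderiv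
  exact congrArg _ hderiv

theorem sum_roots_eval_mul_pow_div_eval_derivative (hP : P.Monic) (hsplits : P.Splits)
    (hsep : P.Separable) (hQ : Q.Monic) {m : ℕ} (hm : Q.natDegree + m < P.natDegree) :
    ∑ x ∈ P.roots.toFinset, Q.eval x / P.derivative.eval x * x ^ m =
      if Q.natDegree + m + 1 = P.natDegree then 1 else 0 := by
  have hmonic : (Q * X ^ m).Monic := hQ.mul (monic_X_pow m)
  have hnat : (Q * X ^ m).natDegree = Q.natDegree + m := by
    rw [hQ.natDegree_mul (monic_X_pow m), natDegree_X_pow]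
  have hsum := sum_roots_eval_div_eval_derivative hP hsplits hsep
    (degree_lt_degree (hnat.trans_lt hm))
  simp_rw [eval_mul, eval_pow, eval_X, mul_div_right_comm] at hsum
  rw [hsum]
  split_ifs with h
  · rw [← h, Nat.add_sub_cancel, ← hnat, hmonic.coeff_natDegree]
  · exact coeff_eq_zero_of_natDegree_lt (by omega)

theorem det_moments_roots (hP : P.Monic) (hsplits : P.Splits) (hsep : P.Separable)
    (hQ : Q.Monic) (hdeg : Q.natDegree + k = P.natDegree) :
    (Matrix.of fun i j : Fin k =>
      ∑ x ∈ P.roots.toFinset, Q.eval x / P.derivative.eval x * x ^ (i + j : ℕ)).det =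
      (-1) ^ (k * (k - 1) / 2) := by
  rw [det_of_forall_lt_rev_eq_zero]
  · rw [prod_eq_one, mul_one]
    intro i _
    rw [Matrix.of_apply, sum_roots_eval_mul_pow_div_eval_derivative hP hsplits hsep hQ, if_pos] <;>
      rw [Fin.val_rev] <;> omega
  · intro i j hij
    rw [Fin.lt_def, Fin.val_rev] at hij
    rw [Matrix.of_apply, sum_roots_eval_mul_pow_div_eval_derivative hP hsplits hsep hQ, if_neg] <;>
      omega

end Residues

theorem vafa_intriligator_normalization_general {K : Type*} [Field K] {P Q : K[X]} {k : ℕ}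
    (hP : P.Monic) (hsplits : P.Splits) (hsep : P.Separable) (hQ : Q.Monic)
    (hdeg : Q.natDegree + k = P.natDegree) (S : Finset (Fin k → K))
    (hS : ∀ l : Fin k → K, l ∈ S ↔ ∀ i, P.IsRoot (l i)) :
    ∑ l ∈ S,
        (∏ i, Q.eval (l i)) * (∏ p : Fin k × Fin k with p.1 < p.2, (l p.1 - l p.2) ^ 2) /
          ∏ i, P.derivative.eval (l i) =
      (-1) ^ (k * (k - 1) / 2) * k ! := by
  classical
  have hS_roots : S = Fintype.piFinset fun _ => P.roots.toFinset := by
    ext l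
    simp [hS, hP.ne_zero]
  simp_rw [prod_filter_lt_sub_sq, mul_div_right_comm, ← prod_div_distrib]
  rw [hS_roots, sum_piFinset_prod_mul_det_vandermonde_sq _ fun x =>
    Q.eval x / P.derivative.eval x, det_moments_roots hP hsplits hsep hQ hdeg, mul_comm]

/-- Let `n ≥ k ≥ 1` and `a ≠ 0`.  Summing over all `k`-tuples
`(λ₁,…,λ_k)` of `n`-th roots of `a` the quantity
`(∏ᵢ λᵢ^{n-k}) · (∏_{i<j} (λᵢ - λⱼ)²) / (∏ᵢ n λᵢ^{n-1})`
gives `(-1)^{k(k-1)/2} · k!`. -/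
theorem vafa_intriligator_normalization
    (n k : ℕ) (hk : 1 ≤ k) (hkn : k ≤ n) (a : ℂ) (ha : a ≠ 0)
    (S : Finset (Fin k → ℂ))
    (hS : ∀ l : Fin k → ℂ, l ∈ S ↔ ∀ i, l i ^ n = a) :
    ∑ l ∈ S,
        (∏ i : Fin k, l i ^ (n - k)) *
          (∏ p ∈ Finset.univ.filter (fun p : Fin k × Fin k => p.1 < p.2),
            (l p.1 - l p.2) ^ 2) /
          ∏ i : Fin k, ((n : ℂ) * l i ^ (n - 1)) =
      (-1 : ℂ) ^ (k * (k - 1) / 2) * Nat.factorial k := by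
  have hn : n ≠ 0 := by omega
  have general := vafa_intriligator_normalization_general (P := X ^ n - C a) (Q := X ^ (n - k))
    (monic_X_pow_sub_C a hn) (IsAlgClosed.splits _)
    (separable_X_pow_sub_C a (Nat.cast_ne_zero.mpr hn) ha) (monic_X_pow _)
    (by rw [natDegree_X_pow, natDegree_X_pow_sub_C, Nat.sub_add_cancel hkn]) S
    (by simpa [sub_eq_zero] using hS)
  simpa [derivative_X_pow] using general
end
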